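/- arXiv:1601.07168 — 10 statements merged into one kernel-verified Lean document; each statement's English description precedes it below -/
import Mathlib

section
/- Let (X, A, d) be a complete C*-algebra-valued metric space and let F : X × X → X be a mapping such that d(F(x,y), F(u,v)) ⪯ a* · d(x,u) · a + a* · d(y,v) · a for all x, y, u, v ∈ X, where a ∈ A is a fixed element with ‖a‖ < 1/√2. Then F has a unique coupled fixed point (x, y); moreover x = y, so F has a unique fixed point in X. -/
open Filter Topology

/-- Conjugating two elements by `a` scales the norm of their sum by at most `‖a‖ ^ 2`. -/
lemma norm_star_mul_mul_add_le {A : Type*} [CStarAlgebra A] (a b c : A) :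
    ‖star a * b * a + star a * c * a‖ ≤ ‖a‖ ^ 2 * (‖b‖ + ‖c‖) := by
  have conj_le (e : A) : ‖star a * e * a‖ ≤ ‖a‖ ^ 2 * ‖e‖ :=
    calc ‖star a * e * a‖ ≤ ‖star a‖ * ‖e‖ * ‖a‖ := norm_mul₃_le
      _ = ‖a‖ ^ 2 * ‖e‖ := by rw [norm_star]; ring
  linarith [norm_add_le (star a * b * a) (star a * c * a), conj_le b, conj_le c]

/-- Banach's fixed point theorem for a real-valued distance `r`, where completeness is only
assumed for sequences such that `r (u (n + p)) (u n)` tends to zero for each fixed `p`. -/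
lemma exists_fixed_point_of_contraction {X : Type*} [Nonempty X] (r : X → X → ℝ)
    (r_nonneg : ∀ x y, 0 ≤ r x y) (eq_of_r : ∀ x y, r x y = 0 → x = y)
    (r_symm : ∀ x y, r x y = r y x) (r_triangle : ∀ x y z, r x y ≤ r x z + r z y)
    (complete : ∀ u : ℕ → X, (∀ p : ℕ, Tendsto (fun n => r (u (n + p)) (u n)) atTop (𝓝 0)) →
      ∃ x : X, Tendsto (fun n => r (u n) x) atTop (𝓝 0))
    {k : ℝ} (hk₀ : 0 ≤ k) (hk₁ : k < 1) (G : X → X) (hG : ∀ x y, r (G x) (G y) ≤ k * r x y) :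
    ∃ x, G x = x := by
  obtain ⟨x₀⟩ := ‹Nonempty X›
  have iterate_le (n : ℕ) (x y : X) : r (G^[n] x) (G^[n] y) ≤ k ^ n * r x y := by
    induction n with
    | zero => simp
    | succ n ih =>
      rw [Function.iterate_succ_apply', Function.iterate_succ_apply', pow_succ', mul_assoc]
      exact (hG _ _).trans (mul_le_mul_of_nonneg_left ih hk₀)
  obtain ⟨x, hx⟩ := complete (fun n => G^[n] x₀) fun p => by
    refine squeeze_zero (fun _ => r_nonneg _ _) (g := fun n => k ^ n * r (G^[p] x₀) x₀)
      (fun n => ?_) ?_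
    · rw [Function.iterate_add_apply]
      exact iterate_le n _ _
    · simpa using (tendsto_pow_atTop_nhds_zero_of_lt_one hk₀ hk₁).mul_const (r (G^[p] x₀) x₀)
  refine ⟨x, eq_of_r _ _ (le_antisymm ?_ (r_nonneg _ _))⟩
  have bound_tendsto : Tendsto (fun n => k * r (G^[n] x₀) x + r (G^[n + 1] x₀) x)
      atTop (𝓝 0) := by
    simpa using (hx.const_mul k).add (hx.comp (tendsto_add_atTop_nat 1))
  refine ge_of_tendsto' bound_tendsto fun n => ?_
  refine (r_triangle _ _ (G^[n + 1] x₀)).trans (add_le_add_left ?_ _)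
  rw [r_symm, Function.iterate_succ_apply']
  exact hG _ _

/-- **Theorem 2.1 (Statement 0).** Let `(X, A, d)` be a complete C*-algebra-valued metric
space and `F : X × X → X` satisfy
`d (F x y) (F u v) ⪯ a* ⬝ d x u ⬝ a + a* ⬝ d y v ⬝ a` for all `x y u v`, where `‖a‖ < 1/√2`.
Then `F` has a unique coupled fixed point `(x, y)`; moreover `x = y`, so `F` has a unique
fixed point in `X`. -/
theorem coupled_fixed_point_star_contraction
    {X : Type*} [Nonempty X] {A : Type*} [CStarAlgebra A]
    [PartialOrder A] [StarOrderedRing A]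
    (d : X → X → A)
    (d_nonneg : ∀ x y, 0 ≤ d x y)
    (d_eq_zero : ∀ x y, d x y = 0 ↔ x = y)
    (d_symm : ∀ x y, d x y = d y x)
    (d_triangle : ∀ x y z, d x y ≤ d x z + d z y)
    (complete : ∀ u : ℕ → X,
      (∀ p : ℕ, Filter.Tendsto (fun n => ‖d (u (n + p)) (u n)‖) Filter.atTop (nhds 0)) →
      ∃ x : X, Filter.Tendsto (fun n => ‖d (u n) x‖) Filter.atTop (nhds 0))
    (F : X → X → X) (a : A)
    (ha : ‖a‖ < 1 / Real.sqrt 2)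
    (hF : ∀ x y u v : X, d (F x y) (F u v) ≤ star a * d x u * a + star a * d y v * a) :
    (∃! p : X × X, F p.1 p.2 = p.1 ∧ F p.2 p.1 = p.2) ∧
    (∀ p : X × X, (F p.1 p.2 = p.1 ∧ F p.2 p.1 = p.2) → p.1 = p.2) ∧
    (∃! x : X, F x x = x) := by
  have ha2 : 2 * ‖a‖ ^ 2 < 1 := by
    rw [lt_div_iff₀ (by positivity)] at ha
    have sq_lt : (‖a‖ * √2) ^ 2 < 1 := by
      rw [sq_lt_one_iff₀ (by positivity)]
      exact ha
    rw [mul_pow, Real.sq_sqrt zero_le_two] at sq_lt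
    linarith
  have norm_le (x y u v : X) :
      ‖d (F x y) (F u v)‖ ≤ ‖a‖ ^ 2 * (‖d x u‖ + ‖d y v‖) :=
    (CStarAlgebra.norm_le_norm_of_nonneg_of_le (d_nonneg _ _) (hF x y u v)).trans
      (norm_star_mul_mul_add_le _ _ _)
  have coupled_unique (x y u v : X) (hx : F x y = x) (hy : F y x = y) (hu : F u v = u)
      (hv : F v u = v) : x = u ∧ y = v := by
    have h₁ := norm_le x y u v
    have h₂ := norm_le y x v u
    rw [hx, hu] at h₁
    rw [hy, hv] at h₂
    have hxu := norm_nonneg (d x u)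
    have hyv := norm_nonneg (d y v)
    have sum_le : ‖d x u‖ + ‖d y v‖ ≤ 0 := by nlinarith
    rw [← d_eq_zero, ← d_eq_zero, ← norm_eq_zero, ← norm_eq_zero (a := d y v)]
    constructor <;> linarith
  obtain ⟨x, hx⟩ := exists_fixed_point_of_contraction (fun x y => ‖d x y‖)
    (fun _ _ => norm_nonneg _) (fun x y h => (d_eq_zero x y).1 (norm_eq_zero.1 h))
    (fun x y => by rw [d_symm])
    (fun x y z => (CStarAlgebra.norm_le_norm_of_nonneg_of_le (d_nonneg _ _)
      (d_triangle x y z)).trans (norm_add_le _ _))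
    complete (by positivity) ha2 (fun x => F x x)
    (fun x y => (norm_le x x y y).trans_eq (by ring))
  refine ⟨⟨(x, x), ⟨hx, hx⟩, ?_⟩, ?_, ⟨x, hx, ?_⟩⟩
  · rintro ⟨u, v⟩ ⟨hu, hv⟩
    exact Prod.ext_iff.2 (coupled_unique u v x x hu hv hx hx)
  · rintro ⟨u, v⟩ ⟨hu, hv⟩
    exact (coupled_unique u v v u hu hv hv hu).1
  · intro y hy
    exact (coupled_unique y y x x hy hy hx hx).1
end

section
/- Let (X, A, d) be a C*-algebra-valued metric space and let F : X × X → X satisfy d(F(x,y), F(u,v)) ⪯ a* · d(x,u) · a + a* · d(y,v) · a for all x, y, u, v ∈ X, where a ∈ A with ‖a‖ < 1/√2. Given arbitrary x₀, y₀ ∈ X, define sequences by x_{n+1} = F(xₙ, yₙ) and y_{n+1} = F(yₙ, xₙ). Then (xₙ) and (yₙ) are Cauchy sequences in X (in fact ‖d(x_{n+p}, xₙ) + d(y_{n+p}, yₙ)‖ ≤ (‖√2·a‖^{2n} / (1 − ‖√2·a‖²)) · ‖d(x₀,x₁) + d(y₀,y₁)‖ for all n, p). -/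
/-- If `0 ≤ c ≤ 2 (a* b a)`, then `‖c‖ ≤ ‖√2 a‖² ‖b‖`. -/
lemma norm_le_of_le_two_conjugate {A : Type*} [CStarAlgebra A] [PartialOrder A]
    [StarOrderedRing A] {a b c : A} (hc : 0 ≤ c)
    (h : c ≤ star a * b * a + star a * b * a) :
    ‖c‖ ≤ ‖Real.sqrt 2 • a‖ ^ 2 * ‖b‖ := by
  have conj_le : ‖star a * b * a‖ ≤ ‖a‖ * ‖b‖ * ‖a‖ := by
    refine (norm_mul_le _ _).trans ?_
    gcongr
    exact (norm_mul_le _ _).trans_eq (by rw [norm_star])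
  have sq_eq : ‖Real.sqrt 2 • a‖ ^ 2 = 2 * ‖a‖ ^ 2 := by
    rw [norm_smul, mul_pow, Real.norm_eq_abs, sq_abs, Real.sq_sqrt zero_le_two]
  calc ‖c‖ ≤ ‖star a * b * a + star a * b * a‖ := CStarAlgebra.norm_le_norm_of_nonneg_of_le hc h
    _ ≤ ‖star a * b * a‖ + ‖star a * b * a‖ := norm_add_le _ _
    _ ≤ ‖Real.sqrt 2 • a‖ ^ 2 * ‖b‖ := by rw [sq_eq]; linarith

/-- A family `s n p` of gap lengths that contracts by `q < 1` in `n` and satisfies the triangle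
inequality in `p` obeys the geometric bound. -/
lemma geometric_bound_of_contracting_gaps {s : ℕ → ℕ → ℝ} {q : ℝ} (hq0 : 0 ≤ q) (hq1 : q < 1)
    (gap_zero : s 0 0 = 0) (gap_nonneg : 0 ≤ s 0 1)
    (contract : ∀ n p, s (n + 1) p ≤ q * s n p)
    (triangle : ∀ p, s 0 (p + 1) ≤ s 1 p + s 0 1) (n p : ℕ) :
    s n p ≤ q ^ n / (1 - q) * s 0 1 := by
  have hq : 0 < 1 - q := sub_pos.2 hq1
  have initial : ∀ p, s 0 p ≤ s 0 1 / (1 - q) := by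
    intro p
    induction p with
    | zero => rw [gap_zero]; positivity
    | succ p ih =>
      calc s 0 (p + 1) ≤ q * s 0 p + s 0 1 := (triangle p).trans (by gcongr; exact contract 0 p)
        _ ≤ q * (s 0 1 / (1 - q)) + s 0 1 := by gcongr
        _ = s 0 1 / (1 - q) := by field_simp; ring
  induction n with
  | zero => exact (initial p).trans_eq (by ring)
  | succ n ih =>
    calc s (n + 1) p ≤ q * s n p := contract n p
      _ ≤ q * (q ^ n / (1 - q) * s 0 1) := by gcongr
      _ = q ^ (n + 1) / (1 - q) * s 0 1 := by ring

/-- In a C*-algebra-valued metric space, if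
`d (F x y) (F u v) ⪯ a* ⬝ d x u ⬝ a + a* ⬝ d y v ⬝ a` with `‖a‖ < 1/√2`, then the Picard-type
iteration sequences `x_{n+1} = F xₙ yₙ`, `y_{n+1} = F yₙ xₙ` are Cauchy; in fact
`‖d x_{n+p} xₙ + d y_{n+p} yₙ‖ ≤ ‖√2 • a‖^{2n} / (1 - ‖√2 • a‖²) * ‖d x₀ x₁ + d y₀ y₁‖`. -/
theorem iteration_sequences_cauchy
    {X : Type*} {A : Type*} [CStarAlgebra A]
    [PartialOrder A] [StarOrderedRing A]
    (d : X → X → A)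
    (d_nonneg : ∀ x y, 0 ≤ d x y)
    (d_eq_zero : ∀ x y, d x y = 0 ↔ x = y)
    (d_symm : ∀ x y, d x y = d y x)
    (d_triangle : ∀ x y z, d x y ≤ d x z + d z y)
    (F : X → X → X) (a : A)
    (ha : ‖a‖ < 1 / Real.sqrt 2)
    (hF : ∀ x y u v : X, d (F x y) (F u v) ≤ star a * d x u * a + star a * d y v * a)
    (x y : ℕ → X)
    (hx : ∀ n, x (n + 1) = F (x n) (y n))
    (hy : ∀ n, y (n + 1) = F (y n) (x n)) :
    (∀ p : ℕ, Filter.Tendsto (fun n => ‖d (x (n + p)) (x n)‖) Filter.atTop (nhds 0)) ∧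
    (∀ p : ℕ, Filter.Tendsto (fun n => ‖d (y (n + p)) (y n)‖) Filter.atTop (nhds 0)) ∧
    (∀ n p : ℕ, ‖d (x (n + p)) (x n) + d (y (n + p)) (y n)‖ ≤
      ‖Real.sqrt 2 • a‖ ^ (2 * n) / (1 - ‖Real.sqrt 2 • a‖ ^ 2) *
        ‖d (x 0) (x 1) + d (y 0) (y 1)‖) := by
  have sum_nonneg : ∀ n p, 0 ≤ d (x (n + p)) (x n) + d (y (n + p)) (y n) := fun n p =>
    add_nonneg (d_nonneg _ _) (d_nonneg _ _)
  have hq1 : ‖Real.sqrt 2 • a‖ ^ 2 < 1 := by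
    rw [sq_lt_one_iff₀ (norm_nonneg _), norm_smul, Real.norm_of_nonneg (Real.sqrt_nonneg 2),
      mul_comm]
    exact (lt_div_iff₀ (by positivity)).1 ha
  have bound : ∀ n p : ℕ, ‖d (x (n + p)) (x n) + d (y (n + p)) (y n)‖ ≤
      ‖Real.sqrt 2 • a‖ ^ (2 * n) / (1 - ‖Real.sqrt 2 • a‖ ^ 2) *
        ‖d (x 0) (x 1) + d (y 0) (y 1)‖ := by
    intro n p
    rw [pow_mul, d_symm (x 0), d_symm (y 0)]
    refine geometric_bound_of_contracting_gaps
      (s := fun n p => ‖d (x (n + p)) (x n) + d (y (n + p)) (y n)‖)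
      (sq_nonneg _) hq1 ?_ (norm_nonneg _) (fun n p => ?_) (fun p => ?_) n p
    · simp [(d_eq_zero _ _).2]
    · refine norm_le_of_le_two_conjugate (sum_nonneg _ _) ?_
      rw [Nat.add_right_comm, hx, hx, hy, hy]
      exact (add_le_add (hF _ _ _ _) (hF _ _ _ _)).trans_eq (by noncomm_ring)
    · refine (CStarAlgebra.norm_le_norm_of_nonneg_of_le (sum_nonneg _ _) ?_).trans
        (norm_add_le _ _)
      simp only [zero_add, add_comm 1 p]
      exact (add_le_add (d_triangle _ _ (x 1)) (d_triangle _ _ (y 1))).trans_eq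
        (add_add_add_comm _ _ _ _)
  have bound_tendsto : Filter.Tendsto (fun n : ℕ =>
      ‖Real.sqrt 2 • a‖ ^ (2 * n) / (1 - ‖Real.sqrt 2 • a‖ ^ 2) *
        ‖d (x 0) (x 1) + d (y 0) (y 1)‖) Filter.atTop (nhds 0) := by
    simp only [pow_mul]
    simpa using ((tendsto_pow_atTop_nhds_zero_of_lt_one (sq_nonneg _) hq1).div_const
      (1 - ‖Real.sqrt 2 • a‖ ^ 2)).mul_const ‖d (x 0) (x 1) + d (y 0) (y 1)‖
  refine ⟨fun p => ?_, fun p => ?_, bound⟩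
  · exact squeeze_zero (fun _ => norm_nonneg _) (fun n =>
      (CStarAlgebra.norm_le_norm_of_nonneg_of_le (d_nonneg _ _)
        (le_add_of_nonneg_right (d_nonneg _ _))).trans (bound n p)) bound_tendsto
  · exact squeeze_zero (fun _ => norm_nonneg _) (fun n =>
      (CStarAlgebra.norm_le_norm_of_nonneg_of_le (d_nonneg _ _)
        (le_add_of_nonneg_left (d_nonneg _ _))).trans (bound n p)) bound_tendsto
end

section
/- Let (X, A, d) be a C*-algebra-valued metric space and let F : X × X → X satisfy d(F(x,y), F(u,v)) ⪯ a* · d(x,u) · a + a* · d(y,v) · a for all x, y, u, v ∈ X, where a ∈ A. Given arbitrary x₀, y₀ ∈ X, define x_{n+1} = F(xₙ, yₙ), y_{n+1} = F(yₙ, xₙ), and set δₙ = d(xₙ, x_{n+1}) + d(yₙ, y_{n+1}). Then for every n ∈ ℕ, 0 ⪯ δₙ ⪯ ((√2·a)*)ⁿ · δ₀ · (√2·a)ⁿ. -/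
/-- In a C*-algebra-valued metric space, if
`d (F x y) (F u v) ⪯ a* ⬝ d x u ⬝ a + a* ⬝ d y v ⬝ a`, and `x_{n+1} = F xₙ yₙ`,
`y_{n+1} = F yₙ xₙ`, `δₙ = d xₙ x_{n+1} + d yₙ y_{n+1}`, then for every `n`,
`0 ⪯ δₙ ⪯ ((√2•a)*)ⁿ ⬝ δ₀ ⬝ (√2•a)ⁿ`. -/
theorem delta_estimate
    {X : Type*} {A : Type*} [CStarAlgebra A]
    [PartialOrder A] [StarOrderedRing A]
    (d : X → X → A)
    (d_nonneg : ∀ x y, 0 ≤ d x y)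
    (d_eq_zero : ∀ x y, d x y = 0 ↔ x = y)
    (d_symm : ∀ x y, d x y = d y x)
    (d_triangle : ∀ x y z, d x y ≤ d x z + d z y)
    (F : X → X → X) (a : A)
    (hF : ∀ x y u v : X, d (F x y) (F u v) ≤ star a * d x u * a + star a * d y v * a)
    (x y : ℕ → X)
    (hx : ∀ n, x (n + 1) = F (x n) (y n))
    (hy : ∀ n, y (n + 1) = F (y n) (x n))
    (δ : ℕ → A)
    (hδ : ∀ n, δ n = d (x n) (x (n + 1)) + d (y n) (y (n + 1))) :
    ∀ n : ℕ, 0 ≤ δ n ∧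
      δ n ≤ (star (Real.sqrt 2 • a)) ^ n * δ 0 * (Real.sqrt 2 • a) ^ n := by
  have step (n : ℕ) : δ (n + 1) ≤ star (Real.sqrt 2 • a) * δ n * (Real.sqrt 2 • a) := by
    have h₁ := hF (x n) (y n) (x (n + 1)) (y (n + 1))
    have h₂ := hF (y n) (x n) (y (n + 1)) (x (n + 1))
    rw [← hx, ← hx] at h₁
    rw [← hy, ← hy] at h₂
    have expand : star (Real.sqrt 2 • a) * δ n * (Real.sqrt 2 • a) =
        (2 : ℝ) • (star a * δ n * a) := by
      simp only [star_smul, star_trivial, smul_mul_assoc, mul_smul_comm, smul_smul,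
        Real.mul_self_sqrt zero_le_two]
    rw [expand, two_smul, hδ (n + 1), hδ n]
    refine (add_le_add h₁ h₂).trans_eq ?_
    noncomm_ring
  intro n
  refine ⟨hδ n ▸ add_nonneg (d_nonneg _ _) (d_nonneg _ _), ?_⟩
  induction n with
  | zero => simp
  | succ n ih =>
    refine (step n).trans ((star_left_conjugate_le_conjugate ih _).trans_eq ?_)
    rw [pow_succ' (star _), pow_succ (Real.sqrt 2 • a)]
    simp only [mul_assoc]
end

section
/- Let (X, A, d) be a C*-algebra-valued metric space and let F : X × X → X satisfy d(F(x,y), F(u,v)) ⪯ a* · d(x,u) · a + a* · d(y,v) · a for all x, y, u, v ∈ X, where a ∈ A with ‖a‖ < 1/√2. If (x, y) and (x', y') are both coupled fixed points of F, then x = x' and y = y'. -/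
/-- A positive element dominated by `a* p a + a* q a` has norm at most `‖a‖² (‖p‖ + ‖q‖)`. -/
theorem norm_le_of_le_star_mul_mul_add {A : Type*} [CStarAlgebra A]
    [PartialOrder A] [StarOrderedRing A] {a p q r : A} (hr : 0 ≤ r)
    (h : r ≤ star a * p * a + star a * q * a) : ‖r‖ ≤ ‖a‖ ^ 2 * (‖p‖ + ‖q‖) := by
  have norm_conj_le (b : A) : ‖star a * b * a‖ ≤ ‖a‖ * ‖b‖ * ‖a‖ := by
    simpa only [norm_star] using norm_mul₃_le (a := star a) (b := b) (c := a)
  calc ‖r‖ ≤ ‖star a * p * a + star a * q * a‖ :=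
        CStarAlgebra.norm_le_norm_of_nonneg_of_le hr h
    _ ≤ ‖a‖ * ‖p‖ * ‖a‖ + ‖a‖ * ‖q‖ * ‖a‖ :=
        norm_add_le_of_le (norm_conj_le p) (norm_conj_le q)
    _ = ‖a‖ ^ 2 * (‖p‖ + ‖q‖) := by ring

/-- In a C*-algebra-valued metric space, if
`d (F x y) (F u v) ⪯ a* ⬝ d x u ⬝ a + a* ⬝ d y v ⬝ a` with `‖a‖ < 1/√2`, then coupled fixed
points of `F` are unique. -/
theorem coupled_fixed_point_unique
    {X : Type*} {A : Type*} [CStarAlgebra A]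
    [PartialOrder A] [StarOrderedRing A]
    (d : X → X → A)
    (d_nonneg : ∀ x y, 0 ≤ d x y)
    (d_eq_zero : ∀ x y, d x y = 0 ↔ x = y)
    (d_symm : ∀ x y, d x y = d y x)
    (d_triangle : ∀ x y z, d x y ≤ d x z + d z y)
    (F : X → X → X) (a : A)
    (ha : ‖a‖ < 1 / Real.sqrt 2)
    (hF : ∀ x y u v : X, d (F x y) (F u v) ≤ star a * d x u * a + star a * d y v * a)
    (x y x' y' : X)
    (hxy : F x y = x ∧ F y x = y)
    (hxy' : F x' y' = x' ∧ F y' x' = y') :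
    x = x' ∧ y = y' := by
  have ha_sq : ‖a‖ ^ 2 < 1 / 2 := by
    calc ‖a‖ ^ 2 < (1 / Real.sqrt 2) ^ 2 := by gcongr
      _ = 1 / 2 := by rw [div_pow, Real.sq_sqrt (by norm_num), one_pow]
  have hx := hF x y x' y'
  have hy := hF y x y' x'
  rw [hxy.1, hxy'.1] at hx
  rw [hxy.2, hxy'.2] at hy
  have hx_norm := norm_le_of_le_star_mul_mul_add (d_nonneg x x') hx
  have hy_norm := norm_le_of_le_star_mul_mul_add (d_nonneg y y') hy
  have hx_nonneg := norm_nonneg (d x x')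
  have hy_nonneg := norm_nonneg (d y y')
  have h_sum : ‖d x x'‖ + ‖d y y'‖ = 0 := by nlinarith
  rw [← d_eq_zero x x', ← d_eq_zero y y', ← norm_eq_zero, ← norm_eq_zero (a := d y y')]
  constructor <;> linarith
end

section
/- Let (X, A, d) be a C*-algebra-valued metric space and let F : X × X → X satisfy d(F(x,y), F(u,v)) ⪯ a* · d(x,u) · a + a* · d(y,v) · a for all x, y, u, v ∈ X, where a ∈ A with ‖a‖ < 1/√2. If (x, y) is a coupled fixed point of F, then x = y (hence x is a fixed point of F, i.e. F(x,x) = x). -/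
/-- In a C⋆-algebra, a positive `p` with `p ≤ a* p a + a* p a` and `‖a‖ < 1/√2` vanishes. -/
theorem eq_zero_of_le_conjugate_add_conjugate
    {A : Type*} [CStarAlgebra A] [PartialOrder A] [StarOrderedRing A] {p a : A}
    (hp : 0 ≤ p) (ha : ‖a‖ < 1 / Real.sqrt 2)
    (h : p ≤ star a * p * a + star a * p * a) : p = 0 := by
  have h_sq : ‖a‖ ^ 2 < 1 / 2 := by
    have := pow_lt_pow_left₀ ha (norm_nonneg a) two_ne_zero
    rwa [div_pow, Real.sq_sqrt zero_le_two, one_pow] at this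
  have h_conj : ‖star a * p * a‖ ≤ ‖a‖ ^ 2 * ‖p‖ :=
    calc ‖star a * p * a‖ ≤ ‖star a‖ * ‖p‖ * ‖a‖ := norm_mul₃_le
      _ = ‖a‖ ^ 2 * ‖p‖ := by rw [norm_star]; ring
  have h_norm : ‖p‖ ≤ ‖star a * p * a‖ + ‖star a * p * a‖ :=
    (CStarAlgebra.norm_le_norm_of_nonneg_of_le hp h).trans (norm_add_le _ _)
  rw [← norm_le_zero_iff]
  nlinarith [norm_nonneg p]

/-- In a C*-algebra-valued metric space, if
`d (F x y) (F u v) ⪯ a* ⬝ d x u ⬝ a + a* ⬝ d y v ⬝ a` with `‖a‖ < 1/√2`, then any coupled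
fixed point `(x, y)` of `F` satisfies `x = y`; in particular `x` is a fixed point of `F`. -/
theorem coupled_fixed_point_diag
    {X : Type*} {A : Type*} [CStarAlgebra A]
    [PartialOrder A] [StarOrderedRing A]
    (d : X → X → A)
    (d_nonneg : ∀ x y, 0 ≤ d x y)
    (d_eq_zero : ∀ x y, d x y = 0 ↔ x = y)
    (d_symm : ∀ x y, d x y = d y x)
    (d_triangle : ∀ x y z, d x y ≤ d x z + d z y)
    (F : X → X → X) (a : A)
    (ha : ‖a‖ < 1 / Real.sqrt 2)
    (hF : ∀ x y u v : X, d (F x y) (F u v) ≤ star a * d x u * a + star a * d y v * a)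
    (x y : X)
    (hxy : F x y = x ∧ F y x = y) :
    x = y ∧ F x x = x := by
  obtain ⟨hx, hy⟩ := hxy
  have h_le := hF x y y x
  rw [hx, hy, d_symm y x] at h_le
  have h_eq : x = y :=
    (d_eq_zero x y).1 (eq_zero_of_le_conjugate_add_conjugate (d_nonneg x y) ha h_le)
  subst h_eq
  exact ⟨rfl, hx⟩
end

section
/- Let (X, A, d) be a complete C*-algebra-valued metric space and let F : X × X → X satisfy d(F(x,y), F(u,v)) ⪯ a · d(F(x,y), x) + b · d(F(u,v), u) for all x, y, u, v ∈ X, where a and b are positive elements of A commuting with every element of A, and ‖a‖ + ‖b‖ < 1. Then F has a unique coupled fixed point (x, y); moreover x = y, so F has a unique fixed point in X. -/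
open Filter Topology in
/-- Kannan's fixed point theorem (existence) for a real-valued distance, with completeness stated
for sequences all of whose fixed-gap distances tend to zero. -/
theorem exists_fixedPoint_of_kannan {X : Type*} [Nonempty X] (D : X → X → ℝ)
    (D_nonneg : ∀ x y, 0 ≤ D x y) (D_self : ∀ x, D x x = 0)
    (eq_of_D_eq_zero : ∀ x y, D x y = 0 → x = y)
    (D_triangle : ∀ x y z, D x y ≤ D x z + D z y)
    (complete : ∀ u : ℕ → X,
      (∀ p : ℕ, Tendsto (fun n => D (u (n + p)) (u n)) atTop (𝓝 0)) →
      ∃ x : X, Tendsto (fun n => D (u n) x) atTop (𝓝 0))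
    (T : X → X) {α β : ℝ} (hα : 0 ≤ α) (hβ : 0 ≤ β) (hαβ : α + β < 1)
    (hT : ∀ x y, D (T x) (T y) ≤ α * D (T x) x + β * D (T y) y) :
    ∃ x, T x = x := by
  obtain ⟨x₀⟩ := ‹Nonempty X›
  set u : ℕ → X := fun n => T^[n] x₀
  have u_succ (n : ℕ) : u (n + 1) = T (u n) := Function.iterate_succ_apply' T n x₀
  have hα' : 0 < 1 - α := by linarith
  have hk : 0 ≤ β / (1 - α) := by positivity
  have step_le (n : ℕ) : D (u (n + 2)) (u (n + 1)) ≤ β / (1 - α) * D (u (n + 1)) (u n) := by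
    have h := hT (u (n + 1)) (u n)
    rw [← u_succ, ← u_succ] at h
    rw [div_mul_eq_mul_div, le_div_iff₀ hα']
    linarith
  have step_le_geom (n : ℕ) :
      D (u (n + 1)) (u n) ≤ (β / (1 - α)) ^ n * D (u 1) (u 0) := by
    induction n with
    | zero => simp
    | succ n ih =>
      calc D (u (n + 2)) (u (n + 1)) ≤ β / (1 - α) * D (u (n + 1)) (u n) := step_le n
        _ ≤ β / (1 - α) * ((β / (1 - α)) ^ n * D (u 1) (u 0)) := by gcongr
        _ = (β / (1 - α)) ^ (n + 1) * D (u 1) (u 0) := by ring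
  have step_tendsto : Tendsto (fun n => D (u (n + 1)) (u n)) atTop (𝓝 0) := by
    refine squeeze_zero (fun n => D_nonneg _ _) step_le_geom ?_
    have hk1 : β / (1 - α) < 1 := by
      rw [div_lt_one hα']
      linarith
    simpa using (tendsto_pow_atTop_nhds_zero_of_lt_one hk hk1).mul_const (D (u 1) (u 0))
  have cauchy (p : ℕ) : Tendsto (fun n => D (u (n + p)) (u n)) atTop (𝓝 0) := by
    induction p with
    | zero => simp [D_self]
    | succ p ih =>
      refine squeeze_zero (fun n => D_nonneg _ _) (fun n => D_triangle _ _ (u (n + p))) ?_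
      simpa [← add_assoc] using (step_tendsto.comp (tendsto_add_atTop_nat p)).add ih
  obtain ⟨x, hx⟩ := complete u cauchy
  refine ⟨x, eq_of_D_eq_zero _ _ (le_antisymm ?_ (D_nonneg _ _))⟩
  have bound (n : ℕ) :
      (1 - α) * D (T x) x ≤ β * D (u (n + 1)) (u n) + D (u (n + 1)) x := by
    have h₁ := D_triangle (T x) x (u (n + 1))
    have h₂ := hT x (u n)
    rw [← u_succ] at h₂
    linarith
  have limit : Tendsto (fun n => β * D (u (n + 1)) (u n) + D (u (n + 1)) x) atTop (𝓝 0) := by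
    simpa using (step_tendsto.const_mul β).add (hx.comp (tendsto_add_atTop_nat 1))
  have h := ge_of_tendsto' limit bound
  exact nonpos_of_mul_nonpos_right h hα'

/-- **Theorem 2.4 (Statement 7).** Let `(X, A, d)` be a complete C*-algebra-valued metric
space and `F : X × X → X` satisfy
`d (F x y) (F u v) ⪯ a ⬝ d (F x y) x + b ⬝ d (F u v) u` where `a, b` are positive central
elements with `‖a‖ + ‖b‖ < 1`.  Then `F` has a unique coupled fixed point `(x, y)`; moreover
`x = y`, so `F` has a unique fixed point. -/
theorem coupled_fixed_point_kannan
    {X : Type*} [Nonempty X] {A : Type*} [CStarAlgebra A]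
    [PartialOrder A] [StarOrderedRing A]
    (d : X → X → A)
    (d_nonneg : ∀ x y, 0 ≤ d x y)
    (d_eq_zero : ∀ x y, d x y = 0 ↔ x = y)
    (d_symm : ∀ x y, d x y = d y x)
    (d_triangle : ∀ x y z, d x y ≤ d x z + d z y)
    (complete : ∀ u : ℕ → X,
      (∀ p : ℕ, Filter.Tendsto (fun n => ‖d (u (n + p)) (u n)‖) Filter.atTop (nhds 0)) →
      ∃ x : X, Filter.Tendsto (fun n => ‖d (u n) x‖) Filter.atTop (nhds 0))
    (F : X → X → X) (a b : A)
    (ha_pos : 0 ≤ a) (ha_comm : ∀ c : A, a * c = c * a)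
    (hb_pos : 0 ≤ b) (hb_comm : ∀ c : A, b * c = c * b)
    (hab : ‖a‖ + ‖b‖ < 1)
    (hF : ∀ x y u v : X, d (F x y) (F u v) ≤ a * d (F x y) x + b * d (F u v) u) :
    (∃! p : X × X, F p.1 p.2 = p.1 ∧ F p.2 p.1 = p.2) ∧
    (∀ p : X × X, (F p.1 p.2 = p.1 ∧ F p.2 p.1 = p.2) → p.1 = p.2) ∧
    (∃! x : X, F x x = x) := by
  have norm_triangle (x y z : X) : ‖d x y‖ ≤ ‖d x z‖ + ‖d z y‖ :=
    (CStarAlgebra.norm_le_norm_of_nonneg_of_le (d_nonneg x y) (d_triangle x y z)).trans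
      (norm_add_le _ _)
  have norm_kannan (x y u v : X) :
      ‖d (F x y) (F u v)‖ ≤ ‖a‖ * ‖d (F x y) x‖ + ‖b‖ * ‖d (F u v) u‖ :=
    (CStarAlgebra.norm_le_norm_of_nonneg_of_le (d_nonneg _ _) (hF x y u v)).trans
      ((norm_add_le _ _).trans (add_le_add (norm_mul_le _ _) (norm_mul_le _ _)))
  have d_self (x : X) : d x x = 0 := (d_eq_zero x x).2 rfl
  have eq_of_fixed {x y u v : X} (hx : F x y = x) (hu : F u v = u) : x = u := by
    have h := norm_kannan x y u v
    rw [hx, hu, d_self, d_self, norm_zero, mul_zero, mul_zero, add_zero] at h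
    exact (d_eq_zero x u).1 (norm_le_zero_iff.1 h)
  obtain ⟨x, hx⟩ := exists_fixedPoint_of_kannan (fun x y => ‖d x y‖) (fun _ _ => norm_nonneg _)
    (fun x => by simp [d_self]) (fun x y h => (d_eq_zero x y).1 (norm_eq_zero.1 h))
    norm_triangle complete (fun x => F x x) (norm_nonneg a) (norm_nonneg b) hab
    (fun x y => norm_kannan x x y y)
  refine ⟨⟨(x, x), ⟨hx, hx⟩, ?_⟩, fun p hp => eq_of_fixed hp.1 hp.2,
    ⟨x, hx, fun y hy => eq_of_fixed hy hx⟩⟩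
  rintro ⟨y, z⟩ ⟨hy, hz⟩
  exact Prod.ext (eq_of_fixed hy hx) (eq_of_fixed hz hx)
end

section
/- Let (X, A, d) be a complete C*-algebra-valued metric space and let F : X × X → X satisfy d(F(x,y), F(u,v)) ⪯ a · d(F(x,y), x) + a · d(F(u,v), u) for all x, y, u, v ∈ X, where a is a positive element of A commuting with every element of A and ‖a‖ < 1/2. Then F has a unique fixed point in X, i.e. a unique x ∈ X with F(x,x) = x. -/
open Filter Topology in
/-- Kannan's fixed point theorem for a real-valued distance `D`, with the completeness hypothesis
phrased through sequences with vanishing differences of every fixed lag. -/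
theorem existsUnique_fixedPoint_of_kannan {X : Type*} [Nonempty X] (D : X → X → ℝ)
    (D_nonneg : ∀ x y, 0 ≤ D x y) (D_eq_zero : ∀ x y, D x y = 0 ↔ x = y)
    (D_triangle : ∀ x y z, D x y ≤ D x z + D z y)
    (complete : ∀ u : ℕ → X,
      (∀ p : ℕ, Tendsto (fun n => D (u (n + p)) (u n)) atTop (𝓝 0)) →
      ∃ x : X, Tendsto (fun n => D (u n) x) atTop (𝓝 0))
    (T : X → X) (k : ℝ) (hk_nonneg : 0 ≤ k) (hk : k < 1 / 2)
    (hT : ∀ x y, D (T x) (T y) ≤ k * (D (T x) x + D (T y) y)) :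
    ∃! x, T x = x := by
  obtain ⟨x₀⟩ := ‹Nonempty X›
  set u : ℕ → X := fun n => T^[n] x₀
  have hu (n : ℕ) : u (n + 1) = T (u n) := Function.iterate_succ_apply' T n x₀
  set e : ℕ → ℝ := fun n => D (T (u n)) (u n)
  have he_succ (n : ℕ) : e (n + 1) ≤ k / (1 - k) * e n := by
    have h : e (n + 1) ≤ k * (e (n + 1) + e n) := by
      simpa only [e, hu] using hT (T (u n)) (u n)
    rw [div_mul_eq_mul_div, le_div_iff₀ (by linarith)]
    linarith
  have hr : 0 ≤ k / (1 - k) := div_nonneg hk_nonneg (by linarith)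
  have hr_lt : k / (1 - k) < 1 := by
    rw [div_lt_one (by linarith)]
    linarith
  have he_le (n : ℕ) : e n ≤ (k / (1 - k)) ^ n * e 0 := by
    induction n with
    | zero => simp
    | succ n ih =>
      calc e (n + 1) ≤ k / (1 - k) * e n := he_succ n
        _ ≤ k / (1 - k) * ((k / (1 - k)) ^ n * e 0) := by gcongr
        _ = (k / (1 - k)) ^ (n + 1) * e 0 := by ring
  have he : Tendsto e atTop (𝓝 0) :=
    squeeze_zero (fun n => D_nonneg _ _) he_le <| by
      simpa using (tendsto_pow_atTop_nhds_zero_of_lt_one hr hr_lt).mul_const (e 0)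
  obtain ⟨x, hx⟩ := complete u fun p => by
    rw [← tendsto_add_atTop_iff_nat 1]
    refine squeeze_zero (g := fun n => k * (e (n + p) + e n)) (fun n => D_nonneg _ _)
      (fun n => ?_) ?_
    · rw [add_right_comm, hu, hu]
      exact hT _ _
    · simpa using (((tendsto_add_atTop_iff_nat p).2 he).add he).const_mul k
  have hTx : D (T x) x = 0 := by
    have hle : D (T x) x ≤ k * (D (T x) x + 0) + 0 := by
      refine ge_of_tendsto' (((he.const_add (D (T x) x)).const_mul k).add
        ((tendsto_add_atTop_iff_nat 1).2 hx)) fun n => ?_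
      rw [hu]
      exact (D_triangle _ _ (T (u n))).trans (by gcongr; exact hT _ _)
    nlinarith [D_nonneg (T x) x]
  refine ⟨x, (D_eq_zero _ _).1 hTx, fun y hy => (D_eq_zero _ _).1 ?_⟩
  have hyx := hT y x
  rw [hTx, (D_eq_zero _ _).2 hy, hy, (D_eq_zero _ _).1 hTx] at hyx
  linarith [D_nonneg y x]

/-- **Corollary 2.5 (Statement 8).** Let `(X, A, d)` be a complete C*-algebra-valued metric
space and `F : X × X → X` satisfy
`d (F x y) (F u v) ⪯ a ⬝ d (F x y) x + a ⬝ d (F u v) u` where `a` is a positive central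
element with `‖a‖ < 1/2`.  Then `F` has a unique fixed point in `X`. -/
theorem fixed_point_kannan_corollary
    {X : Type*} [Nonempty X] {A : Type*} [CStarAlgebra A]
    [PartialOrder A] [StarOrderedRing A]
    (d : X → X → A)
    (d_nonneg : ∀ x y, 0 ≤ d x y)
    (d_eq_zero : ∀ x y, d x y = 0 ↔ x = y)
    (d_symm : ∀ x y, d x y = d y x)
    (d_triangle : ∀ x y z, d x y ≤ d x z + d z y)
    (complete : ∀ u : ℕ → X,
      (∀ p : ℕ, Filter.Tendsto (fun n => ‖d (u (n + p)) (u n)‖) Filter.atTop (nhds 0)) →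
      ∃ x : X, Filter.Tendsto (fun n => ‖d (u n) x‖) Filter.atTop (nhds 0))
    (F : X → X → X) (a : A)
    (ha_pos : 0 ≤ a) (ha_comm : ∀ c : A, a * c = c * a)
    (ha : ‖a‖ < 1 / 2)
    (hF : ∀ x y u v : X, d (F x y) (F u v) ≤ a * d (F x y) x + a * d (F u v) u) :
    ∃! x : X, F x x = x := by
  refine existsUnique_fixedPoint_of_kannan (fun x y => ‖d x y‖) (fun _ _ => norm_nonneg _)
    (fun x y => norm_eq_zero.trans (d_eq_zero x y)) (fun x y z => ?_) complete
    (fun x => F x x) ‖a‖ (norm_nonneg a) ha (fun x y => ?_)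
  · exact (CStarAlgebra.norm_le_norm_of_nonneg_of_le (d_nonneg x y) (d_triangle x y z)).trans
      (norm_add_le _ _)
  · refine (CStarAlgebra.norm_le_norm_of_nonneg_of_le (d_nonneg _ _) (hF x x y y)).trans ?_
    rw [← mul_add]
    exact (norm_mul_le _ _).trans (by gcongr; exact norm_add_le _ _)
end

section
/- Let (X, A, d) be a complete C*-algebra-valued metric space and let F : X × X → X satisfy d(F(x,y), F(u,v)) ⪯ a · d(F(x,y), u) + b · d(F(u,v), x) for all x, y, u, v ∈ X, where a and b are positive elements of A commuting with every element of A, and ‖a‖ + ‖b‖ < 1. Then F has a unique coupled fixed point (x, y); moreover x = y, so F has a unique fixed point in X. -/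
open Filter Topology in
/-- A Chatterjea-type self-map of a nonempty space with a complete real-valued distance has a
fixed point. Completeness is only required for sequences whose `p`-step distances tend to zero,
for each fixed `p`. -/
theorem exists_fixedPoint_of_chatterjea {X : Type*} [Nonempty X] (D : X → X → ℝ)
    (D_nonneg : ∀ x y, 0 ≤ D x y) (D_eq_zero : ∀ x y, D x y = 0 ↔ x = y)
    (D_symm : ∀ x y, D x y = D y x) (D_triangle : ∀ x y z, D x y ≤ D x z + D z y)
    (complete : ∀ u : ℕ → X, (∀ p : ℕ, Tendsto (fun n => D (u (n + p)) (u n)) atTop (𝓝 0)) →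
      ∃ x : X, Tendsto (fun n => D (u n) x) atTop (𝓝 0))
    (T : X → X) {α β : ℝ} (hα : 0 ≤ α) (hβ : 0 ≤ β) (hαβ : α + β < 1)
    (hT : ∀ x u, D (T x) (T u) ≤ α * D (T x) u + β * D (T u) x) :
    ∃ x, T x = x := by
  have D_self (x : X) : D x x = 0 := (D_eq_zero x x).2 rfl
  have step (x : X) : D (T (T x)) (T x) ≤ (α + β) * D (T x) x := by
    have h₁ := hT (T x) x
    have h₂ := hT x (T x)
    rw [D_self] at h₁ h₂
    rw [D_symm (T x) (T (T x))] at h₂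
    have h₃ := D_triangle (T (T x)) x (T x)
    have h₄ := mul_le_mul_of_nonneg_left h₃ (add_nonneg hα hβ)
    nlinarith [D_nonneg (T (T x)) (T x), D_nonneg (T x) x]
  obtain ⟨x₀⟩ := ‹Nonempty X›
  let u : ℕ → X := fun n => T^[n] x₀
  have u_succ (n : ℕ) : u (n + 1) = T (u n) := Function.iterate_succ_apply' T n x₀
  have geom (n : ℕ) : D (u (n + 1)) (u n) ≤ (α + β) ^ n * D (u 1) (u 0) := by
    induction n with
    | zero => simp
    | succ n ih =>
      calc D (u (n + 1 + 1)) (u (n + 1)) ≤ (α + β) * D (u (n + 1)) (u n) := by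
            rw [u_succ (n + 1), u_succ n]; exact step _
        _ ≤ (α + β) * ((α + β) ^ n * D (u 1) (u 0)) :=
            mul_le_mul_of_nonneg_left ih (add_nonneg hα hβ)
        _ = (α + β) ^ (n + 1) * D (u 1) (u 0) := by ring
  have consecutive : Tendsto (fun n => D (u (n + 1)) (u n)) atTop (𝓝 0) := by
    refine squeeze_zero (fun _ => D_nonneg _ _) geom ?_
    simpa using (tendsto_pow_atTop_nhds_zero_of_lt_one (add_nonneg hα hβ) hαβ).mul_const
      (D (u 1) (u 0))
  have cauchy (p : ℕ) : Tendsto (fun n => D (u (n + p)) (u n)) atTop (𝓝 0) := by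
    induction p with
    | zero => simp [D_self]
    | succ p ih =>
      refine squeeze_zero (fun _ => D_nonneg _ _) (fun n => D_triangle _ _ (u (n + p))) ?_
      simpa [← add_assoc] using (consecutive.comp (tendsto_add_atTop_nat p)).add ih
  obtain ⟨x, hx⟩ := complete u cauchy
  refine ⟨x, (D_eq_zero _ _).1 (le_antisymm ?_ (D_nonneg _ _))⟩
  have bound (n : ℕ) :
      (1 - α) * D (T x) x ≤ α * D (u n) x + (β + 1) * D (u (n + 1)) x := by
    have h₁ := D_triangle (T x) x (u (n + 1))
    have h₂ := hT x (u n)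
    rw [← u_succ] at h₂
    have h₃ := D_triangle (T x) (u n) x
    rw [D_symm x (u n)] at h₃
    have h₄ := mul_le_mul_of_nonneg_left h₃ hα
    linarith
  have lim : Tendsto (fun n => α * D (u n) x + (β + 1) * D (u (n + 1)) x) atTop (𝓝 0) := by
    simpa using (hx.const_mul α).add ((hx.comp (tendsto_add_atTop_nat 1)).const_mul (β + 1))
  have h := ge_of_tendsto' lim bound
  exact nonpos_of_mul_nonpos_right h (by linarith)

/-- **Theorem 2.6 (Statement 9).** Let `(X, A, d)` be a complete C*-algebra-valued metric
space and `F : X × X → X` satisfy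
`d (F x y) (F u v) ⪯ a ⬝ d (F x y) u + b ⬝ d (F u v) x` where `a, b` are positive central
elements with `‖a‖ + ‖b‖ < 1`.  Then `F` has a unique coupled fixed point `(x, y)`; moreover
`x = y`, so `F` has a unique fixed point. -/
theorem coupled_fixed_point_chatterjea
    {X : Type*} [Nonempty X] {A : Type*} [CStarAlgebra A]
    [PartialOrder A] [StarOrderedRing A]
    (d : X → X → A)
    (d_nonneg : ∀ x y, 0 ≤ d x y)
    (d_eq_zero : ∀ x y, d x y = 0 ↔ x = y)
    (d_symm : ∀ x y, d x y = d y x)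
    (d_triangle : ∀ x y z, d x y ≤ d x z + d z y)
    (complete : ∀ u : ℕ → X,
      (∀ p : ℕ, Filter.Tendsto (fun n => ‖d (u (n + p)) (u n)‖) Filter.atTop (nhds 0)) →
      ∃ x : X, Filter.Tendsto (fun n => ‖d (u n) x‖) Filter.atTop (nhds 0))
    (F : X → X → X) (a b : A)
    (ha_pos : 0 ≤ a) (ha_comm : ∀ c : A, a * c = c * a)
    (hb_pos : 0 ≤ b) (hb_comm : ∀ c : A, b * c = c * b)
    (hab : ‖a‖ + ‖b‖ < 1)
    (hF : ∀ x y u v : X, d (F x y) (F u v) ≤ a * d (F x y) u + b * d (F u v) x) :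
    (∃! p : X × X, F p.1 p.2 = p.1 ∧ F p.2 p.1 = p.2) ∧
    (∀ p : X × X, (F p.1 p.2 = p.1 ∧ F p.2 p.1 = p.2) → p.1 = p.2) ∧
    (∃! x : X, F x x = x) := by
  have hD (x y u v : X) :
      ‖d (F x y) (F u v)‖ ≤ ‖a‖ * ‖d (F x y) u‖ + ‖b‖ * ‖d (F u v) x‖ :=
    (CStarAlgebra.norm_le_norm_of_nonneg_of_le (d_nonneg _ _) (hF x y u v)).trans <|
      (norm_add_le _ _).trans (add_le_add (norm_mul_le _ _) (norm_mul_le _ _))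
  have eq_of_fixed {x y u v : X} (hx : F x y = x) (hu : F u v = u) : x = u := by
    have h := hD x y u v
    rw [hx, hu, d_symm u x] at h
    rw [← d_eq_zero, ← norm_eq_zero]
    nlinarith [norm_nonneg (d x u)]
  obtain ⟨x, hx⟩ : ∃ x, F x x = x :=
    exists_fixedPoint_of_chatterjea (fun x y => ‖d x y‖) (fun _ _ => norm_nonneg _)
      (fun x y => norm_eq_zero.trans (d_eq_zero x y)) (fun x y => congrArg norm (d_symm x y))
      (fun x y z => (CStarAlgebra.norm_le_norm_of_nonneg_of_le (d_nonneg _ _)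
        (d_triangle x y z)).trans (norm_add_le _ _))
      complete (fun x => F x x) (norm_nonneg a) (norm_nonneg b) hab (fun x u => hD x x u u)
  exact ⟨⟨(x, x), ⟨hx, hx⟩, fun p hp => Prod.ext (eq_of_fixed hp.1 hx) (eq_of_fixed hp.2 hx)⟩,
    fun p hp => eq_of_fixed hp.1 hp.2, x, hx, fun y hy => eq_of_fixed hy hx⟩
end

section
/- Let (X, A, d) be a complete C*-algebra-valued metric space and let F : X × X → X satisfy d(F(x,y), F(u,v)) ⪯ a · d(F(x,y), u) + a · d(F(u,v), x) for all x, y, u, v ∈ X, where a is a positive element of A commuting with every element of A and ‖a‖ < 1/2. Then F has a unique fixed point in X, i.e. a unique x ∈ X with F(x,x) = x. -/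
open Filter Topology

/-- Chatterjea's fixed point theorem for a real-valued distance function, where a sequence counts as
Cauchy when its `p`-step distances tend to zero for every fixed `p`. -/
theorem existsUnique_fixedPoint_of_chatterjea {X : Type*} [Nonempty X] (D : X → X → ℝ)
    (D_nonneg : ∀ x y, 0 ≤ D x y)
    (D_eq_zero : ∀ x y, D x y = 0 ↔ x = y)
    (D_symm : ∀ x y, D x y = D y x)
    (D_triangle : ∀ x y z, D x y ≤ D x z + D z y)
    (complete : ∀ u : ℕ → X,
      (∀ p : ℕ, Tendsto (fun n => D (u (n + p)) (u n)) atTop (𝓝 0)) →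
      ∃ x : X, Tendsto (fun n => D (u n) x) atTop (𝓝 0))
    (T : X → X) (k : ℝ) (hk0 : 0 ≤ k) (hk : k < 1 / 2)
    (hT : ∀ x y, D (T x) (T y) ≤ k * D (T x) y + k * D (T y) x) :
    ∃! x : X, T x = x := by
  obtain ⟨x₀⟩ := ‹Nonempty X›
  set u : ℕ → X := fun n => T^[n] x₀
  have u_succ : ∀ n, u (n + 1) = T (u n) := fun n => Function.iterate_succ_apply' T n x₀
  have hk1 : 0 < 1 - k := by linarith
  have step : ∀ n, D (u (n + 2)) (u (n + 1)) ≤ k / (1 - k) * D (u (n + 1)) (u n) := by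
    intro n
    have h := hT (u (n + 1)) (u n)
    rw [← u_succ, ← u_succ, (D_eq_zero (u (n + 1)) (u (n + 1))).2 rfl] at h
    have h' := mul_le_mul_of_nonneg_left (D_triangle (u (n + 2)) (u n) (u (n + 1))) hk0
    rw [div_mul_eq_mul_div, le_div_iff₀ hk1]
    change D (u (n + 2)) (u (n + 1)) ≤ k * D (u (n + 2)) (u n) + k * 0 at h
    linarith
  have geom : ∀ n, D (u (n + 1)) (u n) ≤ (k / (1 - k)) ^ n * D (u 1) (u 0) := by
    intro n
    induction n with
    | zero => simp
    | succ n ih =>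
      calc D (u (n + 2)) (u (n + 1)) ≤ k / (1 - k) * D (u (n + 1)) (u n) := step n
        _ ≤ k / (1 - k) * ((k / (1 - k)) ^ n * D (u 1) (u 0)) := by gcongr
        _ = (k / (1 - k)) ^ (n + 1) * D (u 1) (u 0) := by ring
  have tendsto_consecutive : Tendsto (fun n => D (u (n + 1)) (u n)) atTop (𝓝 0) := by
    refine squeeze_zero (fun n => D_nonneg _ _) geom ?_
    have hr : k / (1 - k) < 1 := by rw [div_lt_one hk1]; linarith
    simpa using (tendsto_pow_atTop_nhds_zero_of_lt_one (by positivity) hr).mul_const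
      (D (u 1) (u 0))
  obtain ⟨x, hx⟩ := complete u fun p => by
    induction p with
    | zero => simp [(D_eq_zero _ _).2]
    | succ p ih =>
      refine squeeze_zero (fun n => D_nonneg _ _)
        (fun n => D_triangle (u (n + (p + 1))) (u n) (u (n + p))) ?_
      simpa [add_assoc] using ((tendsto_add_atTop_iff_nat p).2 tendsto_consecutive).add ih
  have fixed : T x = x := by
    have bound : ∀ n, (1 - k) * D (T x) x ≤ k * D (u n) x + (1 + k) * D (u (n + 1)) x := by
      intro n
      have h := hT x (u n)
      rw [← u_succ] at h
      have h₁ := D_triangle (T x) x (u (n + 1))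
      have h₂ := mul_le_mul_of_nonneg_left (D_triangle (T x) (u n) x) hk0
      rw [D_symm x (u n)] at h₂
      linarith
    have lim : Tendsto (fun n => k * D (u n) x + (1 + k) * D (u (n + 1)) x) atTop (𝓝 0) := by
      simpa using (hx.const_mul k).add
        (((tendsto_add_atTop_iff_nat 1).2 hx).const_mul (1 + k))
    have hle : (1 - k) * D (T x) x ≤ 0 := ge_of_tendsto' lim bound
    exact (D_eq_zero _ _).1 (le_antisymm (nonpos_of_mul_nonpos_right hle hk1) (D_nonneg _ _))
  refine ⟨x, fixed, fun y hy => ?_⟩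
  have h := hT y x
  rw [fixed, hy, D_symm x y] at h
  have h0 := D_nonneg y x
  exact (D_eq_zero _ _).1 (by nlinarith)

/-- **Corollary 2.7 (Statement 10).** Let `(X, A, d)` be a complete C*-algebra-valued metric
space and `F : X × X → X` satisfy
`d (F x y) (F u v) ⪯ a ⬝ d (F x y) u + a ⬝ d (F u v) x` where `a` is a positive central
element with `‖a‖ < 1/2`.  Then `F` has a unique fixed point in `X`. -/
theorem fixed_point_chatterjea_corollary
    {X : Type*} [Nonempty X] {A : Type*} [CStarAlgebra A]
    [PartialOrder A] [StarOrderedRing A]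
    (d : X → X → A)
    (d_nonneg : ∀ x y, 0 ≤ d x y)
    (d_eq_zero : ∀ x y, d x y = 0 ↔ x = y)
    (d_symm : ∀ x y, d x y = d y x)
    (d_triangle : ∀ x y z, d x y ≤ d x z + d z y)
    (complete : ∀ u : ℕ → X,
      (∀ p : ℕ, Filter.Tendsto (fun n => ‖d (u (n + p)) (u n)‖) Filter.atTop (nhds 0)) →
      ∃ x : X, Filter.Tendsto (fun n => ‖d (u n) x‖) Filter.atTop (nhds 0))
    (F : X → X → X) (a : A)
    (ha_pos : 0 ≤ a) (ha_comm : ∀ c : A, a * c = c * a)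
    (ha : ‖a‖ < 1 / 2)
    (hF : ∀ x y u v : X, d (F x y) (F u v) ≤ a * d (F x y) u + a * d (F u v) x) :
    ∃! x : X, F x x = x := by
  have norm_mono {b c : A} (hb : 0 ≤ b) (hbc : b ≤ c) : ‖b‖ ≤ ‖c‖ :=
    CStarAlgebra.norm_le_norm_of_nonneg_of_le hb hbc
  refine existsUnique_fixedPoint_of_chatterjea (fun x y => ‖d x y‖) (fun x y => norm_nonneg _)
    (fun x y => by simp [d_eq_zero]) (fun x y => by simp [d_symm x y])
    (fun x y z => (norm_mono (d_nonneg x y) (d_triangle x y z)).trans (norm_add_le _ _))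
    complete (fun x => F x x) ‖a‖ (norm_nonneg a) ha fun x y => ?_
  exact (norm_mono (d_nonneg _ _) (hF x x y y)).trans
    ((norm_add_le _ _).trans (add_le_add (norm_mul_le _ _) (norm_mul_le _ _)))
end

section
/- Let (X, A, d) be a C*-algebra-valued metric space and let F : X × X → X satisfy d(F(x,y), F(u,v)) ⪯ a · d(F(x,y), u) + b · d(F(u,v), x) for all x, y, u, v ∈ X, where a and b are positive elements of A commuting with every element of A and ‖a‖ + ‖b‖ < 1. Given arbitrary x₀, y₀ ∈ X, define x_{n+1} = F(xₙ, yₙ) and y_{n+1} = F(yₙ, xₙ). Then for every n ≥ 1, d(xₙ, x_{n+1}) ⪯ (1 − (a+b)/2)⁻¹ · ((a+b)/2) · d(xₙ, x_{n−1}), and the sequences (xₙ) and (yₙ) are Cauchy sequences in X. -/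
open Filter Topology

section CStarAlgebra

variable {A : Type*} [CStarAlgebra A] [PartialOrder A] [StarOrderedRing A]

/-- Left multiplication by a positive central element is monotone. -/
theorem mul_le_mul_left_of_nonneg_of_central {c u v : A} (hc : 0 ≤ c)
    (hcomm : ∀ z : A, Commute c z) (huv : u ≤ v) : c * u ≤ c * v := by
  rw [← sub_nonneg, ← mul_sub]
  exact Commute.mul_nonneg hc (sub_nonneg.2 huv) (hcomm _)

/-- If `c` is positive, central and of norm less than one, then `u ≤ c * (u + v)` can be solved
for `u`. -/
theorem le_inverse_one_sub_mul_of_le_mul_add {c u v : A} (hc : 0 ≤ c)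
    (hcomm : ∀ z : A, Commute c z) (hnorm : ‖c‖ < 1) (h : u ≤ c * (u + v)) :
    u ≤ Ring.inverse (1 - c) * c * v := by
  obtain ⟨w, hw⟩ : IsUnit (1 - c) := isUnit_one_sub_of_norm_lt_one hnorm
  have hw_nonneg : (0 : A) ≤ w := by
    rw [hw, sub_nonneg]
    exact (CStarAlgebra.norm_le_one_iff_of_nonneg c hc).1 hnorm.le
  have hw_comm (z : A) : Commute (↑w⁻¹ : A) z := by
    refine Commute.units_inv_left ?_
    rw [hw]
    exact (Commute.one_left z).sub_left (hcomm z)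
  have hle : (w : A) * u ≤ c * v := by
    rw [hw, sub_mul, one_mul, sub_le_iff_le_add, add_comm, ← mul_add]
    exact h
  have := mul_le_mul_left_of_nonneg_of_central (CFC.inv_nonneg_of_nonneg w hw_nonneg) hw_comm hle
  rwa [Units.inv_mul_cancel_left, ← mul_assoc, ← Ring.inverse_unit, hw] at this

/-- If `0 ≤ u ≤ c * (u + v)` with `‖c‖ < 1`, then `‖u‖ ≤ ‖c‖ / (1 - ‖c‖) * ‖v‖`. -/
theorem norm_le_div_mul_norm_of_le_mul_add {c u v : A} (hu : 0 ≤ u) (hnorm : ‖c‖ < 1)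
    (h : u ≤ c * (u + v)) : ‖u‖ ≤ ‖c‖ / (1 - ‖c‖) * ‖v‖ := by
  have hle : ‖u‖ ≤ ‖c‖ * (‖u‖ + ‖v‖) :=
    calc ‖u‖ ≤ ‖c * (u + v)‖ := CStarAlgebra.norm_le_norm_of_nonneg_of_le hu h
      _ ≤ ‖c‖ * ‖u + v‖ := norm_mul_le _ _
      _ ≤ ‖c‖ * (‖u‖ + ‖v‖) := by gcongr; exact norm_add_le _ _
  rw [div_mul_eq_mul_div, le_div_iff₀ (sub_pos.2 hnorm)]
  linarith

variable {X : Type*} {d : X → X → A}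

/-- If the distances between consecutive terms of a sequence tend to zero, then so do the distances
between terms whose indices differ by a fixed number. -/
theorem tendsto_norm_dist_add_of_tendsto_norm_dist_succ (d_nonneg : ∀ x y, 0 ≤ d x y)
    (d_self : ∀ x, d x x = 0) (d_triangle : ∀ x y z, d x y ≤ d x z + d z y) {x : ℕ → X}
    (h : Tendsto (fun n => ‖d (x (n + 1)) (x n)‖) atTop (𝓝 0)) (p : ℕ) :
    Tendsto (fun n => ‖d (x (n + p)) (x n)‖) atTop (𝓝 0) := by
  induction p with
  | zero => simp [d_self]
  | succ p ih =>
    have hsum := (h.comp (tendsto_add_atTop_nat p)).add ih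
    rw [add_zero] at hsum
    refine squeeze_zero (fun _ => norm_nonneg _) (fun n => ?_) hsum
    exact (CStarAlgebra.norm_le_norm_of_nonneg_of_le (d_nonneg _ _)
      (d_triangle _ _ (x (n + p)))).trans (norm_add_le _ _)

/-- If consecutive distances satisfy `dₙ₊₁ ≤ c * (dₙ₊₁ + dₙ)` with `‖c‖ < 1 / 2`, then they tend
to zero in norm. -/
theorem tendsto_norm_dist_succ_of_le_mul_add (d_nonneg : ∀ x y, 0 ≤ d x y) {c : A}
    (hnorm : ‖c‖ < 1 / 2) {x : ℕ → X}
    (h : ∀ n, d (x (n + 2)) (x (n + 1)) ≤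
      c * (d (x (n + 2)) (x (n + 1)) + d (x (n + 1)) (x n))) :
    Tendsto (fun n => ‖d (x (n + 1)) (x n)‖) atTop (𝓝 0) := by
  have hpos : 0 < 1 - ‖c‖ := by linarith
  have hratio_nonneg : 0 ≤ ‖c‖ / (1 - ‖c‖) := by positivity
  have hratio_lt : ‖c‖ / (1 - ‖c‖) < 1 := by rw [div_lt_one hpos]; linarith
  have hbound (n : ℕ) :
      ‖d (x (n + 1)) (x n)‖ ≤ (‖c‖ / (1 - ‖c‖)) ^ n * ‖d (x 1) (x 0)‖ := by
    induction n with
    | zero => simp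
    | succ n ih =>
      refine (norm_le_div_mul_norm_of_le_mul_add (d_nonneg _ _) (by linarith) (h n)).trans ?_
      rw [pow_succ', mul_assoc]
      gcongr
  refine squeeze_zero (fun _ => norm_nonneg _) hbound ?_
  simpa using (tendsto_pow_atTop_nhds_zero_of_lt_one hratio_nonneg hratio_lt).mul_const
    ‖d (x 1) (x 0)‖

/-- Consecutive distances along the iteration of a Chatterjea-type coupled contraction. -/
theorem chatterjea_dist_succ_le (d_self : ∀ x, d x x = 0) (d_symm : ∀ x y, d x y = d y x)
    (d_triangle : ∀ x y z, d x y ≤ d x z + d z y) {F : X → X → X} {a b : A}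
    (hc_pos : 0 ≤ (2⁻¹ : ℝ) • (a + b)) (hc_comm : ∀ z : A, Commute ((2⁻¹ : ℝ) • (a + b)) z)
    (hF : ∀ x y u v : X, d (F x y) (F u v) ≤ a * d (F x y) u + b * d (F u v) x)
    {x y : ℕ → X} (hx : ∀ n, x (n + 1) = F (x n) (y n)) (n : ℕ) :
    d (x (n + 2)) (x (n + 1)) ≤
      ((2⁻¹ : ℝ) • (a + b)) * (d (x (n + 2)) (x (n + 1)) + d (x (n + 1)) (x n)) := by
  have hleft : d (x (n + 2)) (x (n + 1)) ≤ a * d (x (n + 2)) (x n) := by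
    have := hF (x (n + 1)) (y (n + 1)) (x n) (y n)
    rwa [← hx, ← hx, d_self, mul_zero, add_zero] at this
  have hright : d (x (n + 2)) (x (n + 1)) ≤ b * d (x (n + 2)) (x n) := by
    have := hF (x n) (y n) (x (n + 1)) (y (n + 1))
    rwa [← hx, ← hx, d_self, mul_zero, zero_add, d_symm] at this
  calc d (x (n + 2)) (x (n + 1))
      = (2⁻¹ : ℝ) • (d (x (n + 2)) (x (n + 1)) + d (x (n + 2)) (x (n + 1))) := by
        rw [← two_smul ℝ, smul_smul]; norm_num
    _ ≤ (2⁻¹ : ℝ) • (a * d (x (n + 2)) (x n) + b * d (x (n + 2)) (x n)) :=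
        smul_le_smul_of_nonneg_left (add_le_add hleft hright) (by norm_num)
    _ = ((2⁻¹ : ℝ) • (a + b)) * d (x (n + 2)) (x n) := by rw [smul_mul_assoc, add_mul]
    _ ≤ _ := mul_le_mul_left_of_nonneg_of_central hc_pos hc_comm (d_triangle _ _ _)

end CStarAlgebra

/-- In a C*-algebra-valued metric space, if
`d (F x y) (F u v) ⪯ a ⬝ d (F x y) u + b ⬝ d (F u v) x` with `a, b` positive central elements
and `‖a‖ + ‖b‖ < 1`, then the iteration sequences `x_{n+1} = F xₙ yₙ`, `y_{n+1} = F yₙ xₙ`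
satisfy `d xₙ x_{n+1} ⪯ (1 - (a+b)/2)⁻¹ ⬝ ((a+b)/2) ⬝ d xₙ x_{n-1}` for `n ≥ 1`, and both
sequences are Cauchy. -/
theorem chatterjea_iteration_cauchy
    {X : Type*} {A : Type*} [CStarAlgebra A]
    [PartialOrder A] [StarOrderedRing A]
    (d : X → X → A)
    (d_nonneg : ∀ x y, 0 ≤ d x y)
    (d_eq_zero : ∀ x y, d x y = 0 ↔ x = y)
    (d_symm : ∀ x y, d x y = d y x)
    (d_triangle : ∀ x y z, d x y ≤ d x z + d z y)
    (F : X → X → X) (a b : A)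
    (ha_pos : 0 ≤ a) (ha_comm : ∀ c : A, a * c = c * a)
    (hb_pos : 0 ≤ b) (hb_comm : ∀ c : A, b * c = c * b)
    (hab : ‖a‖ + ‖b‖ < 1)
    (hF : ∀ x y u v : X, d (F x y) (F u v) ≤ a * d (F x y) u + b * d (F u v) x)
    (x y : ℕ → X)
    (hx : ∀ n, x (n + 1) = F (x n) (y n))
    (hy : ∀ n, y (n + 1) = F (y n) (x n)) :
    (∀ n : ℕ, 1 ≤ n → d (x n) (x (n + 1)) ≤
      Ring.inverse (1 - (2⁻¹ : ℝ) • (a + b)) * ((2⁻¹ : ℝ) • (a + b)) * d (x n) (x (n - 1))) ∧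
    (∀ p : ℕ, Filter.Tendsto (fun n => ‖d (x (n + p)) (x n)‖) Filter.atTop (nhds 0)) ∧
    (∀ p : ℕ, Filter.Tendsto (fun n => ‖d (y (n + p)) (y n)‖) Filter.atTop (nhds 0)) := by
  have d_self (z : X) : d z z = 0 := (d_eq_zero z z).2 rfl
  have hc_pos : 0 ≤ (2⁻¹ : ℝ) • (a + b) := smul_nonneg (by norm_num) (add_nonneg ha_pos hb_pos)
  have hc_comm (z : A) : Commute ((2⁻¹ : ℝ) • (a + b)) z :=
    (Commute.add_left (ha_comm z) (hb_comm z)).smul_left _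
  have hc_norm : ‖(2⁻¹ : ℝ) • (a + b)‖ < 1 / 2 := by
    rw [norm_smul, Real.norm_of_nonneg (by norm_num)]
    linarith [norm_add_le a b]
  have hxle := chatterjea_dist_succ_le d_self d_symm d_triangle hc_pos hc_comm hF hx
  have hyle := chatterjea_dist_succ_le d_self d_symm d_triangle hc_pos hc_comm hF hy
  refine ⟨fun n hn => ?_, ?_, ?_⟩
  · obtain ⟨m, rfl⟩ := Nat.exists_eq_add_of_le' hn
    rw [d_symm (x (m + 1)) (x (m + 1 + 1))]
    exact le_inverse_one_sub_mul_of_le_mul_add hc_pos hc_comm (by linarith) (hxle m)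
  · exact tendsto_norm_dist_add_of_tendsto_norm_dist_succ d_nonneg d_self d_triangle
      (tendsto_norm_dist_succ_of_le_mul_add d_nonneg hc_norm hxle)
  · exact tendsto_norm_dist_add_of_tendsto_norm_dist_succ d_nonneg d_self d_triangle
      (tendsto_norm_dist_succ_of_le_mul_add d_nonneg hc_norm hyle)
end
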